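/- arXiv:1708.08873 — 3 statements merged into one kernel-verified Lean document; each statement's English description precedes it below -/
import Mathlib

section
/- Let K be a field, let U₂, U₁, U₀ be K-vector spaces, and let B : U₂ →ₗ[K] U₁ →ₗ[K] U₀ be a K-bilinear map. The set of autotopisms (f₂, f₁, f₀) of B with f₀ = id_{U₀} forms a subgroup of Aut(B), and this subgroup is isomorphic as a group to the group of units M(B)^× of the adjoint algebra M(B); explicitly, a unit (f, g) of M(B) with two-sided inverse pair (f', g') ∈ M(B) corresponds to the autotopism (f, g', id_{U₀}). -/
open MulOpposite

/-!
For invertible `g`, substituting `g u₁` for `u₁` turns the adjointness relation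
`B (f u₂) u₁ = B u₂ (g⁻¹ u₁)` into `B (f u₂) (g u₁) = B u₂ u₁`. Hence `(f, g) ↦ (f, g⁻¹, id)`
matches units with principal autotopisms, and it is multiplicative because inversion undoes the
order reversal on `U₁`.
-/

section CommSemiring

variable {K : Type*} [CommSemiring K] {U₂ U₁ U₀ : Type*}
  [AddCommMonoid U₂] [Module K U₂] [AddCommMonoid U₁] [Module K U₁]
  [AddCommMonoid U₀] [Module K U₀]

/-- The autotopism group `Aut(B)`, as a subgroup of the product of the linear automorphism groups
of `U₂`, `U₁` and `U₀`. -/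
def autotopismGroup (B : U₂ →ₗ[K] U₁ →ₗ[K] U₀) :
    Subgroup ((U₂ ≃ₗ[K] U₂) × (U₁ ≃ₗ[K] U₁) × (U₀ ≃ₗ[K] U₀)) where
  carrier := {f | ∀ (u₂ : U₂) (u₁ : U₁), B (f.1 u₂) (f.2.1 u₁) = f.2.2 (B u₂ u₁)}
  one_mem' _ _ := rfl
  mul_mem' {f g} hf hg u₂ u₁ :=
    (hf (g.1 u₂) (g.2.1 u₁)).trans (congrArg f.2.2 (hg u₂ u₁))
  inv_mem' {f} hf u₂ u₁ := f.2.2.eq_symm_apply.2 <| by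
    change f.2.2 (B (f.1.symm u₂) (f.2.1.symm u₁)) = B u₂ u₁
    rw [← hf, LinearEquiv.apply_symm_apply, LinearEquiv.apply_symm_apply]

/-- The principal autotopisms of `B`: those acting trivially on `U₀`. -/
def principalAutotopisms (B : U₂ →ₗ[K] U₁ →ₗ[K] U₀) :
    Subgroup ((U₂ ≃ₗ[K] U₂) × (U₁ ≃ₗ[K] U₁) × (U₀ ≃ₗ[K] U₀)) :=
  autotopismGroup B ⊓ ((MonoidHom.snd _ _).comp (MonoidHom.snd _ _)).ker

/-- The multiplicative monoid of the adjoint algebra `M(B)`. Taking the second factor in the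
opposite monoid gives the multiplication `(f, g) · (f', g') = (f ∘ f', g' ∘ g)`. -/
def adjointMonoid (B : U₂ →ₗ[K] U₁ →ₗ[K] U₀) :
    Submonoid (Module.End K U₂ × (Module.End K U₁)ᵐᵒᵖ) where
  carrier := {p | ∀ (u₂ : U₂) (u₁ : U₁), B (p.1 u₂) u₁ = B u₂ (p.2.unop u₁)}
  one_mem' _ _ := rfl
  mul_mem' {p q} hp hq u₂ u₁ := (hp (q.1 u₂) u₁).trans (hq u₂ (p.2.unop u₁))

variable {B : U₂ →ₗ[K] U₁ →ₗ[K] U₀}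

lemma mem_adjointMonoid_symm_iff (f : Module.End K U₂) (g : U₁ ≃ₗ[K] U₁) :
    (f, op g.symm.toLinearMap) ∈ adjointMonoid B ↔
      ∀ (u₂ : U₂) (u₁ : U₁), B (f u₂) (g u₁) = B u₂ u₁ := by
  refine forall_congr' fun u₂ => g.surjective.forall.trans ?_
  simp only [unop_op, LinearEquiv.coe_coe, LinearEquiv.symm_apply_apply]

lemma mem_principalAutotopisms_iff
    {f : (U₂ ≃ₗ[K] U₂) × (U₁ ≃ₗ[K] U₁) × (U₀ ≃ₗ[K] U₀)} :
    f ∈ principalAutotopisms B ↔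
      (f.1.toLinearMap, op f.2.1.symm.toLinearMap) ∈ adjointMonoid B ∧ f.2.2 = 1 := by
  rw [mem_adjointMonoid_symm_iff]
  refine and_congr_left fun (hf : f.2.2 = 1) => ?_
  change (∀ u₂ u₁, B (f.1 u₂) (f.2.1 u₁) = f.2.2 (B u₂ u₁)) ↔ _
  simp only [hf, LinearEquiv.coe_one, id_eq, LinearEquiv.coe_coe]

variable (B)

/-- The action of the units of `M(B)` on `U₂` through the first component. -/
def adjointUnitsFst : (adjointMonoid B)ˣ →* (U₂ ≃ₗ[K] U₂) :=
  (LinearMap.GeneralLinearGroup.generalLinearEquiv K U₂).toMonoidHom.comp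
    (Units.map ((MonoidHom.fst _ _).comp (adjointMonoid B).subtype))

/-- The action of the units of `M(B)` on `U₁` through the inverse of the second component; the
inverse turns the right action of `M(B)` into a left action of its units. -/
def adjointUnitsSndInv : (adjointMonoid B)ˣ →* (U₁ ≃ₗ[K] U₁) :=
  (LinearMap.GeneralLinearGroup.generalLinearEquiv K U₁).toMonoidHom.comp <|
    (MulEquiv.inv' (Module.End K U₁)ˣ).symm.toMonoidHom.comp <|
      Units.opEquiv.toMonoidHom.comp <|
        Units.map ((MonoidHom.snd _ _).comp (adjointMonoid B).subtype)

/-- The homomorphism `(f, g) ↦ (f, g⁻¹, id)` from the units of `M(B)` to triples of linear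
automorphisms. -/
def adjointUnitsToTriple :
    (adjointMonoid B)ˣ →* (U₂ ≃ₗ[K] U₂) × (U₁ ≃ₗ[K] U₁) × (U₀ ≃ₗ[K] U₀) :=
  (adjointUnitsFst B).prod ((adjointUnitsSndInv B).prod 1)

lemma adjointUnitsToTriple_injective : Function.Injective (adjointUnitsToTriple B) := by
  intro u v h
  have h_fst : u.val.val.1 = v.val.val.1 := congrArg (fun f => f.1.toLinearMap) h
  have h_snd : u.val.val.2.unop = v.val.val.2.unop :=
    congrArg (fun f => f.2.1.symm.toLinearMap) h
  exact Units.ext (Subtype.ext (Prod.ext h_fst (unop_injective h_snd)))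

lemma range_adjointUnitsToTriple :
    (adjointUnitsToTriple B).range = principalAutotopisms B := by
  ext f
  constructor
  · rintro ⟨u, rfl⟩
    exact mem_principalAutotopisms_iff.2 ⟨u.val.property, rfl⟩
  · intro hf
    obtain ⟨h_adj, h_triv⟩ := mem_principalAutotopisms_iff.1 hf
    have h_adj_inv := (mem_principalAutotopisms_iff.1 (inv_mem hf)).1
    let u : (adjointMonoid B)ˣ :=
      { val := ⟨_, h_adj⟩
        inv := ⟨_, h_adj_inv⟩
        val_inv := Subtype.ext <| Prod.ext f.1.comp_symm (unop_injective f.2.1.comp_symm)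
        inv_val := Subtype.ext <| Prod.ext f.1.symm_comp (unop_injective f.2.1.symm_comp) }
    exact ⟨u, Prod.ext rfl (Prod.ext rfl h_triv.symm)⟩

theorem principal_autotopisms_iso_adjoint_units_general :
    ∃ φ : (adjointMonoid B)ˣ ≃* principalAutotopisms B, ∀ u : (adjointMonoid B)ˣ,
      (φ u).val.1.toLinearMap = u.val.val.1 ∧
        (φ u).val.2.1.toLinearMap = u⁻¹.val.val.2.unop ∧ (φ u).val.2.2 = 1 :=
  ⟨(MonoidHom.ofInjective (adjointUnitsToTriple_injective B)).trans
      (MulEquiv.subgroupCongr (range_adjointUnitsToTriple B)),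
    fun _ => ⟨rfl, rfl, rfl⟩⟩

end CommSemiring

/-- For a bilinear map `B : U₂ × U₁ → U₀`, the autotopisms with
identity `U₀`-component form a subgroup `H` of the autotopism group `Aut(B)`, and
`H` is isomorphic as a group to the group of units of the adjoint algebra `M(B)`
(realized as a submonoid of `End(U₂) × End(U₁)ᵐᵒᵖ`, so that its multiplication is
`(f, g) · (f', g') = (f ∘ f', g' ∘ g)`).  Explicitly, a unit `(f, g)` with inverse
pair `(f', g')` corresponds to the autotopism `(f, g', id)`. -/
theorem principal_autotopisms_iso_adjoint_units
    {K : Type*} [Field K]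
    {U₂ U₁ U₀ : Type*}
    [AddCommGroup U₂] [Module K U₂]
    [AddCommGroup U₁] [Module K U₁]
    [AddCommGroup U₀] [Module K U₀]
    (B : U₂ →ₗ[K] U₁ →ₗ[K] U₀) :
    ∃ (Aut H : Subgroup ((U₂ ≃ₗ[K] U₂) × (U₁ ≃ₗ[K] U₁) × (U₀ ≃ₗ[K] U₀)))
      (MB : Submonoid (Module.End K U₂ × (Module.End K U₁)ᵐᵒᵖ)),
      (Aut : Set ((U₂ ≃ₗ[K] U₂) × (U₁ ≃ₗ[K] U₁) × (U₀ ≃ₗ[K] U₀))) =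
        {f | ∀ (u₂ : U₂) (u₁ : U₁), B (f.1 u₂) (f.2.1 u₁) = f.2.2 (B u₂ u₁)} ∧
      (H : Set ((U₂ ≃ₗ[K] U₂) × (U₁ ≃ₗ[K] U₁) × (U₀ ≃ₗ[K] U₀))) =
        {f | (∀ (u₂ : U₂) (u₁ : U₁), B (f.1 u₂) (f.2.1 u₁) = f.2.2 (B u₂ u₁)) ∧
          f.2.2 = 1} ∧
      H ≤ Aut ∧
      (MB : Set (Module.End K U₂ × (Module.End K U₁)ᵐᵒᵖ)) =
        {p | ∀ (u₂ : U₂) (u₁ : U₁), B (p.1 u₂) u₁ = B u₂ (p.2.unop u₁)} ∧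
      ∃ φ : (↥MB)ˣ ≃* ↥H,
        ∀ u : (↥MB)ˣ,
          ((((φ u : ↥H) :
              (U₂ ≃ₗ[K] U₂) × (U₁ ≃ₗ[K] U₁) × (U₀ ≃ₗ[K] U₀)).1 :
                U₂ →ₗ[K] U₂) =
            ((u : ↥MB) : Module.End K U₂ × (Module.End K U₁)ᵐᵒᵖ).1) ∧
          ((((φ u : ↥H) :
              (U₂ ≃ₗ[K] U₂) × (U₁ ≃ₗ[K] U₁) × (U₀ ≃ₗ[K] U₀)).2.1 :
                U₁ →ₗ[K] U₁) =
            (((u⁻¹ : (↥MB)ˣ) : ↥MB) :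
              Module.End K U₂ × (Module.End K U₁)ᵐᵒᵖ).2.unop) ∧
          (((φ u : ↥H) :
              (U₂ ≃ₗ[K] U₂) × (U₁ ≃ₗ[K] U₁) × (U₀ ≃ₗ[K] U₀)).2.2 = 1) := by
  exact ⟨autotopismGroup B, principalAutotopisms B, adjointMonoid B, rfl, rfl, inf_le_left, rfl,
    principal_autotopisms_iso_adjoint_units_general B⟩
end

section
/- Let K be a field, let U₂, U₁, U₀ be finite-dimensional K-vector spaces, let B : U₂ →ₗ[K] U₁ →ₗ[K] U₀ be a K-bilinear map, and let (f, g) ∈ End(U₂) × End(U₁) be an adjoint pair for B. Then there exists n ≥ 1 such that: U₂ is the internal direct sum of ker(fⁿ) and range(fⁿ); U₁ is the internal direct sum of ker(gⁿ) and range(gⁿ); and this is an orthogonal decomposition for B, meaning B u₂ u₁ = 0 whenever u₂ ∈ ker(fⁿ) and u₁ ∈ range(gⁿ), and B u₂ u₁ = 0 whenever u₂ ∈ range(fⁿ) and u₁ ∈ ker(gⁿ). -/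
/-- An adjoint pair of endomorphisms for a bilinear (more generally, sesquilinear) map `B` between
two possibly different modules. The codomain is a bimodule, so that the scalar rings need not be
commutative. Mathlib's `LinearMap.IsAdjointPair` instead relates two forms, each taking both of its
arguments in a single module. -/
def IsAdjointPair {R R' S S' M N P : Type*} [Semiring R] [Semiring R'] [Semiring S] [Semiring S']
    [AddCommMonoid M] [Module R M] [AddCommMonoid N] [Module S N]
    [AddCommMonoid P] [Module R' P] [Module S' P] [SMulCommClass S' R' P]
    {ρ : R →+* R'} {σ : S →+* S'}
    (B : M →ₛₗ[ρ] N →ₛₗ[σ] P) (f : Module.End R M) (g : Module.End S N) : Prop :=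
  ∀ x y, B (f x) y = B x (g y)

namespace IsAdjointPair

variable {R R' S S' M N P : Type*} [Semiring R] [Semiring R'] [Semiring S] [Semiring S']
  [AddCommMonoid M] [Module R M] [AddCommMonoid N] [Module S N]
  [AddCommMonoid P] [Module R' P] [Module S' P] [SMulCommClass S' R' P]
  {ρ : R →+* R'} {σ : S →+* S'} {B : M →ₛₗ[ρ] N →ₛₗ[σ] P}
  {f f' : Module.End R M} {g g' : Module.End S N}

theorem one (B : M →ₛₗ[ρ] N →ₛₗ[σ] P) : IsAdjointPair B 1 1 := fun _ _ ↦ rfl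

theorem mul (h : IsAdjointPair B f g) (h' : IsAdjointPair B f' g') :
    IsAdjointPair B (f * f') (g' * g) :=
  fun x y ↦ (h (f' x) y).trans (h' x (g y))

theorem pow (h : IsAdjointPair B f g) (n : ℕ) : IsAdjointPair B (f ^ n) (g ^ n) := by
  induction n with
  | zero => simpa only [pow_zero] using one B
  | succ n ih => simpa only [pow_succ f, pow_succ' g] using ih.mul h

theorem apply_eq_zero_of_mem_ker_of_mem_range (h : IsAdjointPair B f g) {x : M} {y : N}
    (hx : x ∈ LinearMap.ker f) (hy : y ∈ LinearMap.range g) : B x y = 0 := by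
  obtain ⟨z, rfl⟩ := hy
  rw [← h, LinearMap.mem_ker.mp hx, map_zero, LinearMap.zero_apply]

theorem apply_eq_zero_of_mem_range_of_mem_ker (h : IsAdjointPair B f g) {x : M} {y : N}
    (hx : x ∈ LinearMap.range f) (hy : y ∈ LinearMap.ker g) : B x y = 0 := by
  obtain ⟨z, rfl⟩ := hx
  rw [h, LinearMap.mem_ker.mp hy, map_zero]

end IsAdjointPair

theorem adjoint_pair_fitting_orthogonal_decomposition_general
    {R R' S S' M N P : Type*} [Ring R] [Semiring R'] [Ring S] [Semiring S']
    [AddCommGroup M] [Module R M] [IsNoetherian R M] [IsArtinian R M]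
    [AddCommGroup N] [Module S N] [IsNoetherian S N] [IsArtinian S N]
    [AddCommMonoid P] [Module R' P] [Module S' P] [SMulCommClass S' R' P]
    {ρ : R →+* R'} {σ : S →+* S'} {B : M →ₛₗ[ρ] N →ₛₗ[σ] P}
    {f : Module.End R M} {g : Module.End S N} (h : IsAdjointPair B f g) :
    ∀ᶠ n in Filter.atTop,
      IsCompl (LinearMap.ker (f ^ n)) (LinearMap.range (f ^ n)) ∧
      IsCompl (LinearMap.ker (g ^ n)) (LinearMap.range (g ^ n)) ∧
      (∀ x ∈ LinearMap.ker (f ^ n), ∀ y ∈ LinearMap.range (g ^ n), B x y = 0) ∧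
      (∀ x ∈ LinearMap.range (f ^ n), ∀ y ∈ LinearMap.ker (g ^ n), B x y = 0) := by
  filter_upwards [LinearMap.eventually_isCompl_ker_pow_range_pow f,
    LinearMap.eventually_isCompl_ker_pow_range_pow g] with n hf hg
  exact ⟨hf, hg,
    fun _ hx _ hy ↦ (h.pow n).apply_eq_zero_of_mem_ker_of_mem_range hx hy,
    fun _ hx _ hy ↦ (h.pow n).apply_eq_zero_of_mem_range_of_mem_ker hx hy⟩

/-- Fitting-type decomposition for an adjoint pair: if `(f, g)` is an
adjoint pair for `B` on finite-dimensional spaces, then for some `n ≥ 1` we have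
`U₂ = ker fⁿ ⊕ range fⁿ`, `U₁ = ker gⁿ ⊕ range gⁿ`, and these decompositions are
orthogonal for `B`. -/
theorem adjoint_pair_fitting_orthogonal_decomposition
    {K : Type*} [Field K]
    {U₂ U₁ U₀ : Type*}
    [AddCommGroup U₂] [Module K U₂] [FiniteDimensional K U₂]
    [AddCommGroup U₁] [Module K U₁] [FiniteDimensional K U₁]
    [AddCommGroup U₀] [Module K U₀]
    (B : U₂ →ₗ[K] U₁ →ₗ[K] U₀)
    (f : Module.End K U₂) (g : Module.End K U₁)
    (hadj : ∀ (u₂ : U₂) (u₁ : U₁), B (f u₂) u₁ = B u₂ (g u₁)) :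
    ∃ n : ℕ, 1 ≤ n ∧
      IsCompl (LinearMap.ker (f ^ n)) (LinearMap.range (f ^ n)) ∧
      IsCompl (LinearMap.ker (g ^ n)) (LinearMap.range (g ^ n)) ∧
      (∀ u₂ ∈ LinearMap.ker (f ^ n), ∀ u₁ ∈ LinearMap.range (g ^ n), B u₂ u₁ = 0) ∧
      (∀ u₂ ∈ LinearMap.range (f ^ n), ∀ u₁ ∈ LinearMap.ker (g ^ n), B u₂ u₁ = 0) := by
  exact ((Filter.eventually_ge_atTop 1).and
    (adjoint_pair_fitting_orthogonal_decomposition_general (f := f) (g := g) hadj)).exists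
end

section
/- Work over the field F₃ = ZMod 3. Define the 4×4 matrices D₁ = !![0,1,0,0; -1,0,0,0; 0,0,0,1; 0,0,-1,0], D₂ = !![0,0,0,0; 0,0,1,0; 0,-1,0,0; 0,0,0,0], D₃ = !![0,0,0,0; 0,0,0,1; 0,0,0,0; 0,-1,0,0], and E₁ = D₁, E₂ = D₂, E₃ = !![0,0,0,1; 0,0,0,0; 0,0,0,0; -1,0,0,0]. Then there is no pair consisting of an invertible 4×4 matrix f over F₃ and an invertible 3×3 matrix h over F₃ such that for each k ∈ {1, 2, 3}: f * Eₖ * fᵀ = h k 1 • D₁ + h k 2 • D₂ + h k 3 • D₃. In other words, the alternating bimaps F₃⁴ × F₃⁴ → F₃³ defined by the systems of forms (D₁, D₂, D₃) and (E₁, E₂, E₃) are not pseudo-isometric. -/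
open Matrix

/-- The system of alternating forms `D` over `𝔽₃`. -/
def D₁ : Matrix (Fin 4) (Fin 4) (ZMod 3) := !![0,1,0,0; -1,0,0,0; 0,0,0,1; 0,0,-1,0]
def D₂ : Matrix (Fin 4) (Fin 4) (ZMod 3) := !![0,0,0,0; 0,0,1,0; 0,-1,0,0; 0,0,0,0]
def D₃ : Matrix (Fin 4) (Fin 4) (ZMod 3) := !![0,0,0,0; 0,0,0,1; 0,0,0,0; 0,-1,0,0]

/-- The system of alternating forms `E` over `𝔽₃`. -/
def E₁ : Matrix (Fin 4) (Fin 4) (ZMod 3) := D₁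
def E₂ : Matrix (Fin 4) (Fin 4) (ZMod 3) := D₂
def E₃ : Matrix (Fin 4) (Fin 4) (ZMod 3) := !![0,0,0,1; 0,0,0,0; 0,0,0,0; -1,0,0,0]

/-!
Up to squares, determinants are invariant under congruence. The Pfaffian of `x D₁ + y D₂ + z D₃` is
`x ^ 2`, while that of `x E₁ + y E₂ + z E₃` is `x ^ 2 + y z`. Hence the singular forms in the span of
the `Dₖ` are closed under addition, whereas `E₂` and `E₃` are singular and `E₂ + E₃` is not. Over a
commutative ring the same argument works with "nilpotent determinant" in place of "singular".
-/

section CommRing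

variable {R : Type*} [CommRing R]

theorem det_mul_mul_transpose {n : Type*} [Fintype n] [DecidableEq n] (f A : Matrix n n R) :
    (f * A * fᵀ).det = f.det ^ 2 * A.det := by
  rw [det_mul, det_mul, det_transpose]
  ring

theorem det_alternating_fin_four (a₀₁ a₀₂ a₀₃ a₁₂ a₁₃ a₂₃ : R) :
    !![0, a₀₁, a₀₂, a₀₃; -a₀₁, 0, a₁₂, a₁₃; -a₀₂, -a₁₂, 0, a₂₃; -a₀₃, -a₁₃, -a₂₃, 0].det =
      (a₀₁ * a₂₃ - a₀₂ * a₁₃ + a₀₃ * a₁₂) ^ 2 := by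
  rw [det_succ_row_zero, Fin.sum_univ_four]
  simp only [det_fin_three, submatrix_apply, Fin.succAbove, of_apply, cons_val, Fin.reduceSucc,
    Fin.reduceCastSucc, Fin.reduceLT, Fin.isValue, Fin.coe_ofNat_eq_mod, ↓reduceIte]
  ring

variable (R) in
/-- The system `(D₁, D₂, D₃)` over an arbitrary commutative ring, indexed from `0`. It is used to
prove the result over every base ring. -/
def formsD : Fin 3 → Matrix (Fin 4) (Fin 4) R :=
  ![!![0,1,0,0; -1,0,0,0; 0,0,0,1; 0,0,-1,0],
    !![0,0,0,0; 0,0,1,0; 0,-1,0,0; 0,0,0,0],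
    !![0,0,0,0; 0,0,0,1; 0,0,0,0; 0,-1,0,0]]

variable (R) in
/-- The system `(E₁, E₂, E₃)` over an arbitrary commutative ring, indexed from `0`; it differs from
`formsD` in the last form only. -/
def formsE : Fin 3 → Matrix (Fin 4) (Fin 4) R :=
  ![formsD R 0, formsD R 1, !![0,0,0,1; 0,0,0,0; 0,0,0,0; -1,0,0,0]]

theorem det_sum_smul_formsD (c : Fin 3 → R) : (∑ k, c k • formsD R k).det = c 0 ^ 4 := by
  -- The entries `-0` match the shape of the matrix in `det_alternating_fin_four`.
  have sum_eq : ∑ k, c k • formsD R k =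
      !![0, c 0, 0, 0; -c 0, 0, c 1, c 2; -0, -c 1, 0, c 0; -0, -c 2, -c 0, 0] := by
    ext i j
    fin_cases i <;> fin_cases j <;> simp [formsD, Fin.sum_univ_three]
  rw [sum_eq, det_alternating_fin_four]
  ring

theorem det_sum_smul_formsE (c : Fin 3 → R) :
    (∑ k, c k • formsE R k).det = (c 0 ^ 2 + c 1 * c 2) ^ 2 := by
  have sum_eq : ∑ k, c k • formsE R k =
      !![0, c 0, 0, c 2; -c 0, 0, c 1, 0; -0, -c 1, 0, c 0; -c 2, -0, -c 0, 0] := by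
    ext i j
    fin_cases i <;> fin_cases j <;> simp [formsD, formsE, Fin.sum_univ_three]
  rw [sum_eq, det_alternating_fin_four]
  ring

theorem isNilpotent_det_add_of_mem_span_formsD {M N : Matrix (Fin 4) (Fin 4) R}
    (hM : M ∈ Submodule.span R (Set.range (formsD R)))
    (hN : N ∈ Submodule.span R (Set.range (formsD R)))
    (hM_det : IsNilpotent M.det) (hN_det : IsNilpotent N.det) : IsNilpotent (M + N).det := by
  obtain ⟨a, rfl⟩ := (Submodule.mem_span_range_iff_exists_fun R).1 hM
  obtain ⟨b, rfl⟩ := (Submodule.mem_span_range_iff_exists_fun R).1 hN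
  have det_add : (∑ k, a k • formsD R k + ∑ k, b k • formsD R k).det = (a 0 + b 0) ^ 4 := by
    simp only [← Finset.sum_add_distrib, ← add_smul]
    exact det_sum_smul_formsD (a + b)
  rw [det_sum_smul_formsD, IsNilpotent.pow_iff_pos four_ne_zero] at hM_det hN_det
  rw [det_add, IsNilpotent.pow_iff_pos four_ne_zero]
  exact (Commute.all _ _).isNilpotent_add hM_det hN_det

theorem D_E_not_pseudo_isometric_general {f : Matrix (Fin 4) (Fin 4) R}
    (h₂ : f * formsE R 1 * fᵀ ∈ Submodule.span R (Set.range (formsD R)))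
    (h₃ : f * formsE R 2 * fᵀ ∈ Submodule.span R (Set.range (formsD R))) :
    IsNilpotent f.det := by
  have det_E₂ : (formsE R 1).det = 0 := by
    simpa [Fin.sum_univ_three] using det_sum_smul_formsE (R := R) ![0, 1, 0]
  have det_E₃ : (formsE R 2).det = 0 := by
    simpa [Fin.sum_univ_three] using det_sum_smul_formsE (R := R) ![0, 0, 1]
  have det_E₂_add_E₃ : (formsE R 1 + formsE R 2).det = 1 := by
    simpa [Fin.sum_univ_three] using det_sum_smul_formsE (R := R) ![0, 1, 1]
  have nilpotent_det_sum : IsNilpotent (f * (formsE R 1 + formsE R 2) * fᵀ).det := by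
    rw [mul_add, add_mul]
    apply isNilpotent_det_add_of_mem_span_formsD h₂ h₃
    · simp [det_E₂]
    · simp [det_E₃]
  rwa [det_mul_mul_transpose, det_E₂_add_E₃, mul_one, IsNilpotent.pow_iff_pos two_ne_zero]
    at nilpotent_det_sum

end CommRing

theorem mem_span_formsD_of_eq {M : Matrix (Fin 4) (Fin 4) (ZMod 3)} {c : Fin 3 → ZMod 3}
    (hM : M = c 0 • D₁ + c 1 • D₂ + c 2 • D₃) :
    M ∈ Submodule.span (ZMod 3) (Set.range (formsD (ZMod 3))) :=
  (Submodule.mem_span_range_iff_exists_fun _).2 ⟨c, (Fin.sum_univ_three _).trans hM.symm⟩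

/-- The alternating bimaps `𝔽₃⁴ × 𝔽₃⁴ → 𝔽₃³` given by the systems of
forms `(D₁, D₂, D₃)` and `(E₁, E₂, E₃)` are not pseudo-isometric: there is no pair
of invertible matrices `f ∈ GL₄(𝔽₃)`, `h ∈ GL₃(𝔽₃)` with
`f * Eₖ * fᵀ = Σⱼ h k j • Dⱼ` for each `k`. -/
theorem D_E_not_pseudo_isometric :
    ¬ ∃ (f : Matrix (Fin 4) (Fin 4) (ZMod 3)) (h : Matrix (Fin 3) (Fin 3) (ZMod 3)),
      IsUnit f ∧ IsUnit h ∧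
      f * E₁ * fᵀ = h 0 0 • D₁ + h 0 1 • D₂ + h 0 2 • D₃ ∧
      f * E₂ * fᵀ = h 1 0 • D₁ + h 1 1 • D₂ + h 1 2 • D₃ ∧
      f * E₃ * fᵀ = h 2 0 • D₁ + h 2 1 • D₂ + h 2 2 • D₃ := by
  rintro ⟨f, h, hf, -, -, h₂, h₃⟩
  exact ((isUnit_iff_isUnit_det f).1 hf).not_isNilpotent <|
    D_E_not_pseudo_isometric_general (mem_span_formsD_of_eq h₂) (mem_span_formsD_of_eq h₃)
end
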